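/- arXiv:2112.00056 — 2 statements merged into one kernel-verified Lean document; each statement's English description precedes it below -/
import Mathlib

section
/- For real p with 0 ≤ p ≤ 2 and arbitrary n×n complex matrices X, Y, define δ_p(X,Y) = sqrt(log det(I + |X - Y|^p)), where |M| = (M*M)^{1/2}. Then δ_p satisfies the triangle inequality: δ_p(X,Y) ≤ δ_p(X,Z) + δ_p(Z,Y) for all X, Y, Z. -/
open Matrix
open scoped ComplexOrder

/-- `|M|^p`: the `p`-th power (real exponent) of the matrix absolute value
`|M| = (MᴴM)^{1/2}`, defined via the functional calculus applied to the
Hermitian positive semidefinite matrix `MᴴM`. -/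
noncomputable def matAbsRpow {n : ℕ} (M : Matrix (Fin n) (Fin n) ℂ) (p : ℝ) :
    Matrix (Fin n) (Fin n) ℂ :=
  (Matrix.posSemidef_conjTranspose_mul_self M).1.cfc (fun t => Real.sqrt t ^ p)

/-- `δ_p(X,Y) = √(log det(I + |X-Y|^p))`. -/
noncomputable def deltaP {n : ℕ} (p : ℝ) (X Y : Matrix (Fin n) (Fin n) ℂ) : ℝ :=
  Real.sqrt (Real.log ((Matrix.det (1 + matAbsRpow (X - Y) p)).re))

lemma conc_two : ConcaveOn ℝ (Set.Ici (0:ℝ)) (fun u => Real.sqrt (Real.log (1 + u ^ 2))) := by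
  have hpos : ∀ x : ℝ, 0 < x → 0 < Real.log (1 + x ^ 2) := fun x hx =>
    Real.log_pos (by nlinarith [sq_nonneg x, pow_pos hx 2])
  have hd : ∀ x : ℝ, 0 < x → HasDerivAt (fun u => Real.sqrt (Real.log (1 + u ^ 2)))
      (Real.sqrt (x ^ 2 / ((1 + x ^ 2) * Real.log (1 + x ^ 2)) * (1 / (1 + x ^ 2)))) x := by
    intro x hx
    have h1 : HasDerivAt (fun u : ℝ => 1 + u ^ 2) (2 * x) x := by
      simpa using (hasDerivAt_pow 2 x).const_add 1
    have h2 := (h1.log (by positivity)).sqrt (hpos x hx).ne'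
    convert h2 using 1
    have h3 : x ^ 2 / ((1 + x ^ 2) * Real.log (1 + x ^ 2)) * (1 / (1 + x ^ 2))
        = (x / (1 + x ^ 2)) ^ 2 / Real.log (1 + x ^ 2) := by
      have := (hpos x hx).ne'
      field_simp
    rw [h3, Real.sqrt_div (by positivity), Real.sqrt_sq (by positivity)]
    have := (Real.sqrt_pos.2 (hpos x hx)).ne'
    field_simp
  apply AntitoneOn.concaveOn_of_deriv (convex_Ici 0)
  · apply Continuous.continuousOn
    apply Continuous.sqrt
    apply Continuous.log (by fun_prop)
    intro x; positivity
  · intro x hx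
    rw [interior_Ici, Set.mem_Ioi] at hx
    exact (hd x hx).differentiableAt.differentiableWithinAt
  · intro x hx y hy hxy
    rw [interior_Ici, Set.mem_Ioi] at hx hy
    rw [(hd x hx).deriv, (hd y hy).deriv]
    apply Real.sqrt_le_sqrt
    have hxy2 : x ^ 2 ≤ y ^ 2 := by gcongr
    have hx2 : 0 < x ^ 2 := by positivity
    have hy2 : 0 < y ^ 2 := by positivity
    have key := Real.convexOn_mul_log.secant_mono (a := 1) (x := 1 + x ^ 2) (y := 1 + y ^ 2)
      (by simp) (by simp; positivity) (by simp; positivity) (by linarith) (by linarith)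
      (by linarith)
    simp only [Real.log_one, mul_zero, sub_zero, add_sub_cancel_left] at key
    have hpx := hpos x hx
    have hpy := hpos y hy
    have key2 : y ^ 2 / ((1 + y ^ 2) * Real.log (1 + y ^ 2))
        ≤ x ^ 2 / ((1 + x ^ 2) * Real.log (1 + x ^ 2)) := by
      have := inv_anti₀ (by positivity) key
      rwa [inv_div, inv_div] at this
    gcongr

/-- scalar function -/
noncomputable def gfun (p : ℝ) (t : ℝ) : ℝ := Real.sqrt (Real.log (1 + t ^ p))

lemma gfun_nonneg (p t : ℝ) : 0 ≤ gfun p t := Real.sqrt_nonneg _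

lemma gfun_zero {p : ℝ} (hp : 0 < p) : gfun p 0 = 0 := by
  simp [gfun, Real.zero_rpow hp.ne']

lemma gfun_mono {p : ℝ} (hp : 0 < p) : MonotoneOn (gfun p) (Set.Ici 0) := by
  intro x hx y hy hxy
  have hx : 0 ≤ x := hx
  have hy : 0 ≤ y := hy
  unfold gfun
  have : 0 ≤ x ^ p := Real.rpow_nonneg hx p
  gcongr

lemma gfun_concave {p : ℝ} (hp : 0 < p) (hp2 : p ≤ 2) : ConcaveOn ℝ (Set.Ici 0) (gfun p) := by
  have h1 : ConcaveOn ℝ (Set.Ici (0:ℝ)) (fun t => t ^ (p / 2)) :=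
    Real.concaveOn_rpow (by positivity) (by linarith)
  have h2 : ∀ t : ℝ, 0 ≤ t → gfun p t = Real.sqrt (Real.log (1 + (t ^ (p / 2)) ^ 2)) := by
    intro t ht
    rw [← Real.rpow_natCast, ← Real.rpow_mul ht]
    simp [gfun]
  refine ⟨convex_Ici 0, ?_⟩
  intro x hx y hy a b ha hb hab
  have hx' : 0 ≤ x := hx
  have hy' : 0 ≤ y := hy
  have hz : 0 ≤ a • x + b • y := by simp only [smul_eq_mul]; positivity
  rw [h2 x hx, h2 y hy, h2 _ hz]
  refine (conc_two.2 (x := x ^ (p/2)) (y := y ^ (p/2)) (Real.rpow_nonneg hx' _)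
    (Real.rpow_nonneg hy' _) ha hb hab).trans ?_
  have h3 := h1.2 hx hy ha hb hab
  have h4 : 0 ≤ a • x ^ (p/2) + b • y ^ (p/2) := by simp only [smul_eq_mul]; positivity
  simp only
  gcongr

/-- real diagonal matrix -/
noncomputable def rdiag {n : ℕ} (x : Fin n → ℝ) : Matrix (Fin n) (Fin n) ℂ :=
  Matrix.diagonal (fun i => (x i : ℂ))

/-- squared norm -/
noncomputable def nsq {n : ℕ} (v : Fin n → ℂ) : ℝ := ∑ i, ‖v i‖ ^ 2

/-- real part of the quadratic form -/
noncomputable def qf {n : ℕ} (M : Matrix (Fin n) (Fin n) ℂ) (v : Fin n → ℂ) : ℝ :=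
  (star v ⬝ᵥ M *ᵥ v).re

lemma rdiag_conj {n : ℕ} (x : Fin n → ℝ) : (rdiag x)ᴴ = rdiag x := by
  unfold rdiag
  rw [Matrix.diagonal_conjTranspose]
  congr 1
  ext i
  simp

lemma rdiag_mul {n : ℕ} (x y : Fin n → ℝ) : rdiag x * rdiag y = rdiag (fun i => x i * y i) := by
  simp [rdiag]

lemma nsq_nonneg {n : ℕ} (v : Fin n → ℂ) : 0 ≤ nsq v := by unfold nsq; positivity

lemma dot_self {n : ℕ} (v : Fin n → ℂ) : star v ⬝ᵥ v = (nsq v : ℂ) := by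
  simp [dotProduct, nsq, Complex.conj_mul']

lemma dot_adj {n : ℕ} (M : Matrix (Fin n) (Fin n) ℂ) (v w : Fin n → ℂ) :
    star v ⬝ᵥ (M *ᵥ w) = star (Mᴴ *ᵥ v) ⬝ᵥ w := by
  rw [Matrix.star_mulVec, Matrix.conjTranspose_conjTranspose, Matrix.dotProduct_mulVec]

lemma dot_le {n : ℕ} (v w : Fin n → ℂ) :
    ‖star v ⬝ᵥ w‖ ≤ Real.sqrt (nsq v) * Real.sqrt (nsq w) := by
  calc ‖star v ⬝ᵥ w‖ ≤ ∑ i, ‖v i‖ * ‖w i‖ := by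
        unfold dotProduct
        refine (norm_sum_le _ _).trans (le_of_eq ?_)
        simp
    _ ≤ _ := Real.sum_mul_le_sqrt_mul_sqrt _ _ _

lemma qf_rdiag {n : ℕ} (x : Fin n → ℝ) (v : Fin n → ℂ) :
    qf (rdiag x) v = ∑ i, x i * ‖v i‖ ^ 2 := by
  unfold qf rdiag
  simp only [dotProduct, Matrix.mulVec_diagonal, Complex.re_sum, Pi.star_apply, RCLike.star_def]
  refine Finset.sum_congr rfl fun i _ => ?_
  rw [mul_left_comm, Complex.conj_mul']
  norm_cast

lemma qf_conj {n : ℕ} (M R : Matrix (Fin n) (Fin n) ℂ) (v : Fin n → ℂ) :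
    qf (R * M * Rᴴ) v = qf M (Rᴴ *ᵥ v) := by
  unfold qf
  rw [← Matrix.mulVec_mulVec, ← Matrix.mulVec_mulVec, dot_adj]

lemma qf_gram {n : ℕ} (R : Matrix (Fin n) (Fin n) ℂ) (v : Fin n → ℂ) :
    qf (R * Rᴴ) v = nsq (Rᴴ *ᵥ v) := by
  unfold qf
  rw [← Matrix.mulVec_mulVec, dot_adj, dot_self, Complex.ofReal_re]

lemma qf_add {n : ℕ} (M N : Matrix (Fin n) (Fin n) ℂ) (v : Fin n → ℂ) :
    qf (M + N) v = qf M v + qf N v := by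
  simp [qf, Matrix.add_mulVec]

lemma qf_diag {n : ℕ} (x : Fin n → ℝ) (V : Matrix (Fin n) (Fin n) ℂ) (v : Fin n → ℂ) :
    qf (V * rdiag x * Vᴴ) v = ∑ i, x i * ‖(Vᴴ *ᵥ v) i‖ ^ 2 := by
  rw [qf_conj, qf_rdiag]

lemma nsq_unitary {n : ℕ} {V : Matrix (Fin n) (Fin n) ℂ} (hV : V * Vᴴ = 1) (v : Fin n → ℂ) :
    nsq (Vᴴ *ᵥ v) = nsq v := by
  rw [← qf_gram, hV]
  simp [qf, dot_self]

lemma spec {n : ℕ} {A : Matrix (Fin n) (Fin n) ℂ} (hA : A.IsHermitian) :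
    ∃ V : Matrix (Fin n) (Fin n) ℂ, Vᴴ * V = 1 ∧ V * Vᴴ = 1 ∧
      A = V * rdiag hA.eigenvalues * Vᴴ := by
  refine ⟨hA.eigenvectorUnitary, ?_, ?_, ?_⟩
  · exact Unitary.coe_star_mul_self hA.eigenvectorUnitary
  · exact Unitary.coe_mul_star_self hA.eigenvectorUnitary
  · have := hA.spectral_theorem
    rw [Unitary.conjStarAlgAut_apply] at this
    exact this

/-- the common rank function for eigenvalues -/
noncomputable def rk (n : ℕ) : Fin n ≃ Fin (Fintype.card (Fin n)) :=
  (Fintype.equivOfCardEq (Fintype.card_fin _)).symm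

/-- sorted along `rk` -/
def Srt {n : ℕ} (x : Fin n → ℝ) : Prop := ∀ i j, rk n i ≤ rk n j → x j ≤ x i

lemma srt_eig {n : ℕ} {A : Matrix (Fin n) (Fin n) ℂ} (hA : A.IsHermitian) :
    Srt hA.eigenvalues := fun _ _ h => hA.eigenvalues₀_antitone h

lemma domin {n : ℕ} {x y : Fin n → ℝ} (hx : Srt x) (hy : Srt y) (hy0 : ∀ i, 0 ≤ y i)
    {V W : Matrix (Fin n) (Fin n) ℂ} (hV : V * Vᴴ = 1) (hW : W * Wᴴ = 1)
    {g : ℝ → ℝ} (hg : MonotoneOn g (Set.Ici 0))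
    (h : ∀ v, nsq v = 1 → qf (V * rdiag x * Vᴴ) v ≤ g (qf (W * rdiag y * Wᴴ) v)) (i : Fin n) :
    x i ≤ g (y i) := by
  let M : Matrix (Fin n) (Fin n) ℂ := fun j =>
    if j = i then 0 else if rk n i < rk n j then Vᴴ j else Wᴴ j
  have hM : M.det = 0 := Matrix.det_eq_zero_of_row_eq_zero i (by intro j; simp [M])
  obtain ⟨u, hu0, hu⟩ := Matrix.exists_mulVec_eq_zero_iff.2 hM
  have hnu : 0 < nsq u := by
    obtain ⟨k, hk⟩ := Function.ne_iff.1 hu0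
    have hk : u k ≠ 0 := hk
    refine Finset.sum_pos' (fun _ _ => by positivity) ⟨k, Finset.mem_univ _, by positivity⟩
  set c : ℝ := (Real.sqrt (nsq u))⁻¹ with hc
  set v : Fin n → ℂ := (c : ℂ) • u with hv
  have hnv : nsq v = 1 := by
    simp only [hv, nsq, Pi.smul_apply, smul_eq_mul, norm_mul, mul_pow, ← Finset.mul_sum]
    change _ * nsq u = 1
    rw [Complex.norm_real, Real.norm_eq_abs, sq_abs, hc, inv_pow, Real.sq_sqrt hnu.le]
    exact inv_mul_cancel₀ hnu.ne'
  have hMv : M *ᵥ v = 0 := by rw [hv, Matrix.mulVec_smul, hu, smul_zero]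
  have h1 : ∀ j, rk n i < rk n j → (Vᴴ *ᵥ v) j = 0 := by
    intro j hj
    have h2 := congrFun hMv j
    have hji : j ≠ i := by rintro rfl; exact lt_irrefl _ hj
    simpa [Matrix.mulVec, M, hji, hj] using h2
  have h2 : ∀ j, rk n j < rk n i → (Wᴴ *ᵥ v) j = 0 := by
    intro j hj
    have h2 := congrFun hMv j
    have hji : j ≠ i := by rintro rfl; exact lt_irrefl _ hj
    simpa [Matrix.mulVec, M, hji, hj.not_gt] using h2
  have h3 : x i ≤ qf (V * rdiag x * Vᴴ) v := by
    rw [qf_diag]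
    calc x i = x i * nsq (Vᴴ *ᵥ v) := by rw [nsq_unitary hV, hnv, mul_one]
      _ ≤ _ := by
        unfold nsq
        rw [Finset.mul_sum]
        refine Finset.sum_le_sum fun j _ => ?_
        by_cases hj : rk n i < rk n j
        · simp [h1 j hj]
        · exact mul_le_mul_of_nonneg_right (hx _ _ (not_lt.1 hj)) (by positivity)
  have h4 : qf (W * rdiag y * Wᴴ) v ≤ y i := by
    rw [qf_diag]
    calc _ ≤ y i * nsq (Wᴴ *ᵥ v) := by
          unfold nsq
          rw [Finset.mul_sum]
          refine Finset.sum_le_sum fun j _ => ?_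
          by_cases hj : rk n j < rk n i
          · simp [h2 j hj]
          · exact mul_le_mul_of_nonneg_right (hy _ _ (not_lt.1 hj)) (by positivity)
      _ = _ := by rw [nsq_unitary hW, hnv, mul_one]
  have h5 : 0 ≤ qf (W * rdiag y * Wᴴ) v := by
    rw [qf_diag]
    exact Finset.sum_nonneg fun j _ => mul_nonneg (hy0 j) (by positivity)
  exact h3.trans ((h v hnv).trans (hg h5 (hy0 i) h4))

/-- Frobenius norm -/
noncomputable def fr {n : ℕ} (M : Matrix (Fin n) (Fin n) ℂ) : ℝ :=
  Real.sqrt (Matrix.trace (Mᴴ * M)).re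

lemma fr_add {n : ℕ} (M N : Matrix (Fin n) (Fin n) ℂ) : fr (M + N) ≤ fr M + fr N := by
  let _inst : NormedAddCommGroup (Matrix (Fin n) (Fin n) ℂ) := Matrix.frobeniusNormedAddCommGroup
  have h : ∀ M : Matrix (Fin n) (Fin n) ℂ, fr M = ‖M‖ := by
    intro M
    rw [Matrix.frobenius_norm_def, fr, Real.sqrt_eq_rpow]
    congr 1
    simp only [Matrix.trace, Matrix.diag_apply, Matrix.mul_apply, Matrix.conjTranspose_apply,
      RCLike.star_def, Complex.conj_mul', Complex.re_sum]
    rw [Finset.sum_comm]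
    refine Finset.sum_congr rfl fun i _ => Finset.sum_congr rfl fun j _ => ?_
    norm_cast
  rw [h, h, h]
  exact norm_add_le _ _

lemma fr_diag {n : ℕ} (x : Fin n → ℝ) {V : Matrix (Fin n) (Fin n) ℂ} (hV : Vᴴ * V = 1) :
    fr (V * rdiag x * Vᴴ) = Real.sqrt (∑ i, x i ^ 2) := by
  have h : (V * rdiag x * Vᴴ)ᴴ * (V * rdiag x * Vᴴ) = V * (rdiag x * rdiag x * Vᴴ) := by
    simp only [Matrix.conjTranspose_mul, Matrix.conjTranspose_conjTranspose, rdiag_conj]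
    calc _ = V * rdiag x * (Vᴴ * V) * rdiag x * Vᴴ := by simp only [Matrix.mul_assoc]
      _ = _ := by rw [hV]; simp only [Matrix.mul_assoc, Matrix.one_mul]
  rw [fr, h, Matrix.trace_mul_comm, Matrix.mul_assoc, hV, Matrix.mul_one, rdiag_mul, rdiag,
    Matrix.trace_diagonal]
  simp only [Complex.re_sum, Complex.ofReal_re, sq]

lemma conj_mul_conj {n : ℕ} (x y : Fin n → ℝ) {V : Matrix (Fin n) (Fin n) ℂ} (hV : Vᴴ * V = 1) :
    (V * rdiag x * Vᴴ) * (V * rdiag y * Vᴴ) = V * rdiag (fun i => x i * y i) * Vᴴ := by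
  calc _ = V * rdiag x * (Vᴴ * V) * rdiag y * Vᴴ := by simp only [Matrix.mul_assoc]
    _ = V * (rdiag x * rdiag y) * Vᴴ := by rw [hV]; simp only [Matrix.mul_assoc, Matrix.one_mul]
    _ = _ := by rw [rdiag_mul]

lemma conj_herm {n : ℕ} (x : Fin n → ℝ) (V : Matrix (Fin n) (Fin n) ℂ) :
    (V * rdiag x * Vᴴ)ᴴ = V * rdiag x * Vᴴ := by
  simp only [Matrix.conjTranspose_mul, Matrix.conjTranspose_conjTranspose, rdiag_conj,
    Matrix.mul_assoc]

/-- singular values -/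
noncomputable def sv {n : ℕ} (M : Matrix (Fin n) (Fin n) ℂ) (i : Fin n) : ℝ :=
  Real.sqrt ((Matrix.posSemidef_conjTranspose_mul_self M).1.eigenvalues i)

lemma sv_nonneg {n : ℕ} (M : Matrix (Fin n) (Fin n) ℂ) (i : Fin n) : 0 ≤ sv M i :=
  Real.sqrt_nonneg _

lemma srt_sv {n : ℕ} (M : Matrix (Fin n) (Fin n) ℂ) : Srt (sv M) := fun i j h =>
  Real.sqrt_le_sqrt (srt_eig (Matrix.posSemidef_conjTranspose_mul_self M).1 i j h)

lemma sv_spec {n : ℕ} (M : Matrix (Fin n) (Fin n) ℂ) :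
    ∃ V : Matrix (Fin n) (Fin n) ℂ, Vᴴ * V = 1 ∧ V * Vᴴ = 1 ∧
      Mᴴ * M = V * rdiag (fun i => sv M i * sv M i) * Vᴴ := by
  obtain ⟨V, h1, h2, h3⟩ := spec (Matrix.posSemidef_conjTranspose_mul_self M).1
  refine ⟨V, h1, h2, ?_⟩
  have h4 : (fun i => sv M i * sv M i)
      = (Matrix.posSemidef_conjTranspose_mul_self M).1.eigenvalues := by
    funext i
    exact Real.mul_self_sqrt ((Matrix.posSemidef_conjTranspose_mul_self M).eigenvalues_nonneg i)
  rw [h4]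
  exact h3

lemma polar {n : ℕ} (C : Matrix (Fin n) (Fin n) ℂ) :
    ∃ V G : Matrix (Fin n) (Fin n) ℂ, V * Vᴴ = 1 ∧ G * C = V * rdiag (sv C) * Vᴴ ∧
      ∀ v, nsq (Gᴴ *ᵥ v) ≤ nsq v := by
  obtain ⟨V, h1, h2, h3⟩ := sv_spec C
  refine ⟨V, V * rdiag (fun i => (sv C i)⁻¹) * Vᴴ * Cᴴ, h2, ?_, ?_⟩
  · rw [Matrix.mul_assoc _ Cᴴ C, h3, conj_mul_conj _ _ h1]
    congr 3
    funext i
    by_cases h : sv C i = 0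
    · simp [h]
    · field_simp
  · intro v
    have h4 : V * rdiag (fun i => (sv C i)⁻¹) * Vᴴ * Cᴴ *
        (V * rdiag (fun i => (sv C i)⁻¹) * Vᴴ * Cᴴ)ᴴ =
        V * rdiag (fun i => (sv C i)⁻¹ * (sv C i * sv C i) * (sv C i)⁻¹) * Vᴴ := by
      rw [Matrix.conjTranspose_mul _ Cᴴ, conj_herm, Matrix.conjTranspose_conjTranspose,
        ← conj_mul_conj _ _ h1, ← conj_mul_conj _ _ h1, ← h3]
      simp only [Matrix.mul_assoc]
    rw [← qf_gram, h4, qf_diag, ← nsq_unitary h2 v]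
    unfold nsq
    refine Finset.sum_le_sum fun i _ => ?_
    have : (sv C i)⁻¹ * (sv C i * sv C i) * (sv C i)⁻¹ ≤ 1 := by
      by_cases h : sv C i = 0
      · simp [h]
      · apply le_of_eq
        field_simp
    exact mul_le_of_le_one_left (by positivity) this

lemma upper {n : ℕ} (A G : Matrix (Fin n) (Fin n) ℂ) (hG : ∀ v, nsq (Gᴴ *ᵥ v) ≤ nsq v) :
    ∃ R : Matrix (Fin n) (Fin n) ℂ, Rᴴ * R = rdiag (sv A) ∧
      ∀ v, qf (G * A) v ≤ nsq (Rᴴ *ᵥ v) := by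
  let H : Matrix (Fin n) (Fin n) ℂ := (1 / 2 : ℂ) • (G * A + (G * A)ᴴ)
  have hH : H.IsHermitian := by
    unfold Matrix.IsHermitian
    simp only [H, Matrix.conjTranspose_smul, Matrix.conjTranspose_add,
      Matrix.conjTranspose_conjTranspose]
    rw [add_comm]
    congr 1
    simp
  have hq : ∀ v, qf H v = qf (G * A) v := by
    intro v
    have h1 : star v ⬝ᵥ ((G * A)ᴴ *ᵥ v) = star (star v ⬝ᵥ ((G * A) *ᵥ v)) := by
      rw [dot_adj, Matrix.conjTranspose_conjTranspose, ← Matrix.star_dotProduct_star, star_star]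
    unfold qf
    simp only [H, Matrix.smul_mulVec, Matrix.add_mulVec, dotProduct_smul, dotProduct_add, h1]
    simp
    ring
  obtain ⟨V, h1, h2, h3⟩ := spec hH
  obtain ⟨W, k1, k2, k3⟩ := sv_spec A
  have hle : ∀ i, hH.eigenvalues i ≤ sv A i := by
    intro i
    have key := domin (srt_eig hH) (y := fun i => sv A i * sv A i)
      (fun i j h => mul_le_mul (srt_sv A i j h) (srt_sv A i j h) (sv_nonneg _ _) (sv_nonneg _ _))
      (fun i => mul_self_nonneg _) h2 k2 (g := Real.sqrt)
      (fun a _ b _ hab => Real.sqrt_le_sqrt hab) ?_ i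
    · rwa [Real.sqrt_mul_self (sv_nonneg _ _)] at key
    · intro v hv
      rw [← h3, ← k3, hq]
      have h5 : qf (Aᴴ * A) v = nsq (A *ᵥ v) := by
        simpa using qf_gram Aᴴ v
      rw [h5]
      unfold qf
      rw [← Matrix.mulVec_mulVec, dot_adj]
      refine (Complex.re_le_norm _).trans ((dot_le _ _).trans ?_)
      refine mul_le_of_le_one_left (Real.sqrt_nonneg _) ?_
      rw [Real.sqrt_le_one]
      exact (hG v).trans hv.le
  refine ⟨V * rdiag (fun i => Real.sqrt (sv A i)), ?_, ?_⟩
  · rw [Matrix.conjTranspose_mul, rdiag_conj, Matrix.mul_assoc, ← Matrix.mul_assoc Vᴴ, h1,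
      Matrix.one_mul, rdiag_mul]
    congr 1
    funext i
    exact Real.mul_self_sqrt (sv_nonneg _ _)
  · intro v
    have h6 : V * rdiag (fun i => Real.sqrt (sv A i)) * (V * rdiag (fun i => Real.sqrt (sv A i)))ᴴ
        = V * rdiag (sv A) * Vᴴ := by
      rw [Matrix.conjTranspose_mul, rdiag_conj, Matrix.mul_assoc, ← Matrix.mul_assoc (rdiag _),
        rdiag_mul, ← Matrix.mul_assoc]
      congr 3
      funext i
      exact Real.mul_self_sqrt (sv_nonneg _ _)
    rw [← qf_gram, h6, ← hq, h3, qf_diag, qf_diag]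
    refine Finset.sum_le_sum fun i _ => ?_
    exact mul_le_mul_of_nonneg_right (hle i) (by positivity)

lemma jensen {n : ℕ} {g : ℝ → ℝ} (hg0 : g 0 = 0) (hc : ConcaveOn ℝ (Set.Ici 0) g)
    {t ω : Fin n → ℝ} (ht : ∀ i, 0 ≤ t i) (hω : ∀ i, 0 ≤ ω i) (h0 : ∀ i, t i = 0 → ω i = 0)
    (h1 : ∑ i, ω i / t i ≤ 1) : ∑ i, (g (t i) / t i) * ω i ≤ g (∑ i, ω i) := by
  have key := hc.map_add_sum_le (t := Finset.univ) (w := fun i => ω i / t i) (p := t)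
    (v := 1 - ∑ i, ω i / t i) (q := 0) (fun i _ => div_nonneg (hω i) (ht i))
    (by ring) (fun i _ => ht i) (by linarith) (by simp)
  simp only [smul_eq_mul, hg0, mul_zero, zero_add] at key
  have e1 : ∑ i, ω i / t i * t i = ∑ i, ω i := Finset.sum_congr rfl fun i _ => by
    by_cases h : t i = 0
    · simp [h, h0 i h]
    · field_simp
  rw [e1] at key
  refine le_trans (le_of_eq (Finset.sum_congr rfl fun i _ => ?_)) key
  ring

lemma core {n : ℕ} {g : ℝ → ℝ} (hg0 : g 0 = 0) (hgn : ∀ x, 0 ≤ g x)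
    (hc : ConcaveOn ℝ (Set.Ici 0) g) (hm : MonotoneOn g (Set.Ici 0))
    {t s : Fin n → ℝ} (ht : ∀ i, 0 ≤ t i) (hs : ∀ i, 0 ≤ s i) (hss : Srt s)
    {V R : Matrix (Fin n) (Fin n) ℂ} (hV1 : Vᴴ * V = 1) (hV : V * Vᴴ = 1)
    (hR : Rᴴ * R = rdiag s)
    (hRT : ∀ v, nsq (Rᴴ *ᵥ v) ≤ qf (V * rdiag t * Vᴴ) v) :
    fr ((V * rdiag (fun i => Real.sqrt (g (t i) / t i)) * Vᴴ) * (R * Rᴴ) *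
      (V * rdiag (fun i => Real.sqrt (g (t i) / t i)) * Vᴴ)) ≤ Real.sqrt (∑ i, g (s i) ^ 2) := by
  set K := V * rdiag (fun i => Real.sqrt (g (t i) / t i)) * Vᴴ with hK
  have hKh : Kᴴ = K := conj_herm _ _
  have hKK : K * K = V * rdiag (fun i => g (t i) / t i) * Vᴴ := by
    rw [hK, conj_mul_conj _ _ hV1]
    congr 3
    funext i
    exact Real.mul_self_sqrt (div_nonneg (hgn _) (ht _))
  have hP := Matrix.posSemidef_conjTranspose_mul_self (K * R)
  obtain ⟨U, h1, h2, h3⟩ := spec hP.1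
  have hfr : fr (K * (R * Rᴴ) * K) = fr ((K * R)ᴴ * (K * R)) := by
    have ht2 : Matrix.trace ((K * (R * Rᴴ) * K)ᴴ * (K * (R * Rᴴ) * K)) =
        Matrix.trace (((K * R)ᴴ * (K * R))ᴴ * ((K * R)ᴴ * (K * R))) := by
      clear_value K
      simp only [Matrix.conjTranspose_mul, Matrix.conjTranspose_conjTranspose, hKh]
      rw [show K * (R * Rᴴ * K) * (K * (R * Rᴴ) * K) = (K * R) * (Rᴴ * K * K * R * Rᴴ * K) by
        simp only [Matrix.mul_assoc], Matrix.trace_mul_comm]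
      simp only [Matrix.mul_assoc]
    rw [fr, fr, ht2]
  rw [hfr, h3, fr_diag _ h1]
  apply Real.sqrt_le_sqrt
  refine Finset.sum_le_sum fun i _ => ?_
  refine pow_le_pow_left₀ (hP.eigenvalues_nonneg i) ?_ 2
  refine domin (srt_eig hP.1) hss hs h2 (W := 1) (by simp) hm ?_ i
  intro v hv
  rw [← h3, Matrix.conjTranspose_one, Matrix.mul_one, Matrix.one_mul, ← hR]
  have e1 : qf (Rᴴ * R) v = nsq (Vᴴ *ᵥ (R *ᵥ v)) := by
    rw [nsq_unitary hV]
    simpa using qf_gram Rᴴ v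
  have e2 : qf ((K * R)ᴴ * (K * R)) v = qf (V * rdiag (fun i => g (t i) / t i) * Vᴴ) (R *ᵥ v) := by
    rw [← hKK]
    have := qf_conj (K * K) Rᴴ v
    rw [Matrix.conjTranspose_conjTranspose] at this
    rw [← this, Matrix.conjTranspose_mul, hKh]
    simp only [Matrix.mul_assoc]
  rw [e1, e2, qf_diag]
  set w := Vᴴ *ᵥ (R *ᵥ v) with hw
  have bound : ∀ z : Fin n → ℂ, ‖star z ⬝ᵥ w‖ ^ 2 ≤ ∑ i, t i * ‖z i‖ ^ 2 := by
    intro z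
    have b1 : star z ⬝ᵥ w = star (Rᴴ *ᵥ (V *ᵥ z)) ⬝ᵥ v := by
      rw [hw, dot_adj, Matrix.conjTranspose_conjTranspose, dot_adj]
    have b2 := hRT (V *ᵥ z)
    rw [qf_diag, Matrix.mulVec_mulVec _ Vᴴ V, hV1, Matrix.one_mulVec] at b2
    have b3 := dot_le (Rᴴ *ᵥ (V *ᵥ z)) v
    rw [hv, Real.sqrt_one, mul_one] at b3
    rw [b1]
    calc _ ≤ Real.sqrt (nsq (Rᴴ *ᵥ (V *ᵥ z))) ^ 2 := pow_le_pow_left₀ (norm_nonneg _) b3 2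
      _ = nsq (Rᴴ *ᵥ (V *ᵥ z)) := Real.sq_sqrt (nsq_nonneg _)
      _ ≤ _ := b2
  refine jensen hg0 hc ht (fun i => by positivity) ?_ ?_
  · intro i hi
    have hb := bound (Pi.single i (w i))
    have e3 : star (Pi.single i (w i) : Fin n → ℂ) ⬝ᵥ w = star (w i) * w i := by
      rw [← Pi.single_star, single_dotProduct]
    have e4 : ∑ j, t j * ‖(Pi.single i (w i) : Fin n → ℂ) j‖ ^ 2 = 0 := by
      refine Finset.sum_eq_zero fun j _ => ?_
      by_cases hj : j = i
      · subst hj; simp [hi]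
      · simp [hj]
    rw [e3, e4, norm_mul, norm_star] at hb
    have : (‖w i‖ * ‖w i‖) ^ 2 = 0 := le_antisymm hb (by positivity)
    simpa using this
  · have hb := bound (fun i => w i / (t i : ℂ))
    set q := ∑ i, ‖w i‖ ^ 2 / t i with hq
    have hq0 : 0 ≤ q := Finset.sum_nonneg fun i _ => div_nonneg (by positivity) (ht i)
    have e3 : star (fun i => w i / (t i : ℂ)) ⬝ᵥ w = (q : ℂ) := by
      simp only [dotProduct, hq, Complex.ofReal_sum]
      refine Finset.sum_congr rfl fun i _ => ?_
      simp only [Pi.star_apply, RCLike.star_def, map_div₀, Complex.conj_ofReal, div_mul_eq_mul_div,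
        Complex.conj_mul']
      norm_cast
    have e4 : ∑ i, t i * ‖w i / (t i : ℂ)‖ ^ 2 = q := by
      refine Finset.sum_congr rfl fun i _ => ?_
      rw [norm_div, Complex.norm_real, Real.norm_eq_abs, div_pow, sq_abs]
      by_cases h : t i = 0
      · simp [h]
      · field_simp
    rw [e3, e4, Complex.norm_real, Real.norm_eq_abs, sq_abs] at hb
    nlinarith

lemma tri {n : ℕ} {g : ℝ → ℝ} (hg0 : g 0 = 0) (hgn : ∀ x, 0 ≤ g x)
    (hc : ConcaveOn ℝ (Set.Ici 0) g) (hm : MonotoneOn g (Set.Ici 0))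
    (A B : Matrix (Fin n) (Fin n) ℂ) :
    Real.sqrt (∑ i, g (sv (A + B) i) ^ 2) ≤
      Real.sqrt (∑ i, g (sv A i) ^ 2) + Real.sqrt (∑ i, g (sv B i) ^ 2) := by
  obtain ⟨V, G, hV, hGC, hG⟩ := polar (A + B)
  obtain ⟨R, hR1, hR2⟩ := upper A G hG
  obtain ⟨Q, hQ1, hQ2⟩ := upper B G hG
  have hT : (R * Rᴴ + Q * Qᴴ).PosSemidef :=
    (Matrix.posSemidef_self_mul_conjTranspose R).add (Matrix.posSemidef_self_mul_conjTranspose Q)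
  obtain ⟨U, h1, h2, h3⟩ := spec hT.1
  have ht := hT.eigenvalues_nonneg
  have hst := srt_eig hT.1
  generalize hT.1.eigenvalues = t at h3 ht hst
  have hqT : ∀ v, qf (U * rdiag t * Uᴴ) v = nsq (Rᴴ *ᵥ v) + nsq (Qᴴ *ᵥ v) := by
    intro v
    rw [← h3, qf_add, qf_gram, qf_gram]
  have hle : ∀ i, sv (A + B) i ≤ t i := by
    refine domin (srt_sv _) hst ht hV h2 (g := fun x => x) (fun a _ b _ h => h) ?_
    intro v _
    rw [← hGC, hqT, Matrix.mul_add, qf_add]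
    exact add_le_add (hR2 v) (hQ2 v)
  have c1 := core hg0 hgn hc hm ht (sv_nonneg A) (srt_sv A) h1 h2 hR1
    (fun v => by rw [hqT]; linarith [nsq_nonneg (Qᴴ *ᵥ v)])
  have c2 := core hg0 hgn hc hm ht (sv_nonneg B) (srt_sv B) h1 h2 hQ1
    (fun v => by rw [hqT]; linarith [nsq_nonneg (Rᴴ *ᵥ v)])
  refine le_trans ?_ ((fr_add _ _).trans (add_le_add c1 c2))
  rw [← Matrix.add_mul, ← Matrix.mul_add, h3, conj_mul_conj _ _ h1, conj_mul_conj _ _ h1,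
    fr_diag _ h1]
  apply Real.sqrt_le_sqrt
  refine Finset.sum_le_sum fun i _ => ?_
  have e : Real.sqrt (g (t i) / t i) * t i * Real.sqrt (g (t i) / t i) = g (t i) := by
    rw [mul_right_comm, Real.mul_self_sqrt (div_nonneg (hgn _) (ht _))]
    by_cases h : t i = 0
    · simp [h, hg0]
    · field_simp
  rw [e]
  exact pow_le_pow_left₀ (hgn _) (hm (sv_nonneg _ _) (ht i) (hle i)) 2

lemma deltaP_eq {n : ℕ} (p : ℝ) (X Y : Matrix (Fin n) (Fin n) ℂ) :
    deltaP p X Y = Real.sqrt (∑ i, gfun p (sv (X - Y) i) ^ 2) := by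
  unfold deltaP matAbsRpow
  congr 1
  have hpos : ∀ i, 0 ≤ sv (X - Y) i ^ p := fun i => Real.rpow_nonneg (sv_nonneg _ _) _
  have hdet : Matrix.det (1 + (Matrix.posSemidef_conjTranspose_mul_self (X - Y)).1.cfc
      (fun t => Real.sqrt t ^ p)) = ((∏ i, (1 + sv (X - Y) i ^ p) : ℝ) : ℂ) := by
    rw [Matrix.IsHermitian.cfc]
    set U := (Matrix.posSemidef_conjTranspose_mul_self (X - Y)).1.eigenvectorUnitary
    rw [← map_one (Unitary.conjStarAlgAut ℂ _ U), ← map_add, Unitary.conjStarAlgAut_apply,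
      Matrix.det_mul_comm, ← Matrix.mul_assoc, Unitary.coe_star_mul_self, Matrix.one_mul,
      ← Matrix.diagonal_one, Matrix.diagonal_add, Matrix.det_diagonal]
    simp [sv]
  rw [hdet, Complex.ofReal_re, Real.log_prod (fun i _ => by linarith [hpos i] |> ne_of_gt)]
  refine Finset.sum_congr rfl fun i _ => ?_
  rw [gfun, Real.sq_sqrt]
  exact Real.log_nonneg (by linarith [hpos i])

/-- Triangle inequality for `δ_p`, `0 ≤ p ≤ 2`. -/
theorem deltaP_triangle {n : ℕ} (p : ℝ) (hp0 : 0 ≤ p) (hp2 : p ≤ 2)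
    (X Y Z : Matrix (Fin n) (Fin n) ℂ) :
    deltaP p X Y ≤ deltaP p X Z + deltaP p Z Y := by
  rw [deltaP_eq, deltaP_eq, deltaP_eq]
  rcases hp0.eq_or_lt with rfl | hp
  · simp only [gfun, Real.rpow_zero]
    exact le_add_of_nonneg_left (Real.sqrt_nonneg _)
  · have h : X - Y = (X - Z) + (Z - Y) := by abel
    rw [h]
    exact tri (gfun_zero hp) (gfun_nonneg p) (gfun_concave hp hp2) (gfun_mono hp) _ _
end

section
/- Let f : ℝ_+ → ℝ_+ be concave with f(0) = 0, and let A, B be n×n complex matrices. Then the singular values satisfy the weak majorization { f(σ_j(A+B)) }_j ≺_w { f(σ_j(A)) + f(σ_j(B)) }_j. -/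
open Matrix Finset
open scoped ComplexOrder

/-- `x` is weakly majorized by `y` (`x ≺_w y`). -/
def IsWeaklyMajorizedBy {n : ℕ} (x y : Fin n → ℝ) : Prop :=
  ∀ s : Finset (Fin n), ∃ t : Finset (Fin n), t.card = s.card ∧ ∑ i ∈ s, x i ≤ ∑ i ∈ t, y i

/-- Singular values of a complex matrix: the square roots of the eigenvalues of `MᴴM`. -/
noncomputable def singVals {n : ℕ} (M : Matrix (Fin n) (Fin n) ℂ) : Fin n → ℝ :=
  fun j => Real.sqrt ((Matrix.posSemidef_conjTranspose_mul_self M).1.eigenvalues j)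

/-- Sum over a window of indices. -/
lemma count_lt {n : ℕ} (q : ℕ) (hq : q ≤ n) (c : ℝ) :
    ∑ j : Fin n, (if j.val < q then c else 0) = q * c := by
  rw [Fin.sum_univ_eq_sum_range (fun i => if i < q then c else 0) n, ← Finset.sum_filter]
  have : (Finset.range n).filter (fun i => i < q) = Finset.range q := by
    ext i; simp; omega
  rw [this]; simp

lemma count_window {n : ℕ} (a m : ℕ) (hq : a + m ≤ n) (c : ℝ) :
    ∑ j : Fin n, (if a ≤ j.val ∧ j.val < a + m then c else 0) = m * c := by
  have h1 := count_lt (n := n) (a + m) hq c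
  have h2 := count_lt (n := n) a (by omega) c
  have h3 : ∑ j : Fin n, (if j.val < a + m then c else 0)
      = ∑ j : Fin n, (if j.val < a then c else 0)
        + ∑ j : Fin n, (if a ≤ j.val ∧ j.val < a + m then c else 0) := by
    rw [← Finset.sum_add_distrib]
    refine Finset.sum_congr rfl fun j _ => ?_
    split_ifs <;> first | omega | simp
  push_cast at h1
  linarith

lemma weights_le {n : ℕ} (g c : Fin n → ℝ) (hg : Antitone g) (hg0 : ∀ j, 0 ≤ g j)
    (hc0 : ∀ j, 0 ≤ c j) (hc1 : ∀ j, c j ≤ 1) (a m : ℕ) (hm : a + m ≤ n)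
    (hca : ∀ j : Fin n, j.val < a → c j = 0) (hcs : ∑ j, c j ≤ m) :
    ∑ j, g j * c j ≤ ∑ j : Fin n, if a ≤ j.val ∧ j.val < a + m then g j else 0 := by
  obtain ⟨τ, hτ0, hτ1, hτ2⟩ : ∃ τ : ℝ, 0 ≤ τ ∧ (∀ j : Fin n, j.val < a + m → τ ≤ g j) ∧
      (∀ j : Fin n, a + m ≤ j.val → g j ≤ τ) := by
    by_cases h : a + m < n
    · refine ⟨g ⟨a + m, h⟩, hg0 _, fun j hj => hg ?_, fun j hj => hg ?_⟩
      · exact Fin.le_def.2 (le_of_lt hj)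
      · exact Fin.le_def.2 hj
    · exact ⟨0, le_rfl, fun j _ => hg0 j, fun j hj => absurd j.2 (by omega)⟩
  have key : ∀ j : Fin n, g j * c j - τ * c j ≤
      (if a ≤ j.val ∧ j.val < a + m then g j else 0)
        - (if a ≤ j.val ∧ j.val < a + m then τ else 0) := by
    intro j
    have := hc0 j
    have := hc1 j
    rcases lt_or_ge j.val a with h | h
    · rw [hca j h, if_neg (by omega), if_neg (by omega)]; simp
    rcases lt_or_ge j.val (a + m) with h' | h'
    · rw [if_pos ⟨h, h'⟩, if_pos ⟨h, h'⟩]; nlinarith [hτ1 j h']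
    · rw [if_neg (by omega), if_neg (by omega)]; nlinarith [hτ2 j h']
  have := Finset.sum_le_sum (fun j (_ : j ∈ Finset.univ) => key j)
  rw [Finset.sum_sub_distrib, Finset.sum_sub_distrib, ← Finset.mul_sum, count_window a m hm] at this
  nlinarith

lemma weights_ge {n : ℕ} (g d : Fin n → ℝ) (hg : Antitone g) 
    (hc0 : ∀ j, 0 ≤ d j) (hc1 : ∀ j, d j ≤ 1) (r m : ℕ) (hm : r + m ≤ n)
    (hca : ∀ j : Fin n, r + m ≤ j.val → d j = 0) (hcs : ∑ j, d j = m) :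
    (∑ j : Fin n, if r ≤ j.val ∧ j.val < r + m then g j else 0) ≤ ∑ j, g j * d j := by
  obtain ⟨τ, hτ1, hτ2⟩ : ∃ τ : ℝ, (∀ j : Fin n, j.val < r → τ ≤ g j) ∧
      (∀ j : Fin n, r ≤ j.val → g j ≤ τ) := by
    by_cases h : r < n
    · refine ⟨g ⟨r, h⟩, fun j hj => hg ?_, fun j hj => hg ?_⟩
      · exact Fin.le_def.2 (le_of_lt hj)
      · exact Fin.le_def.2 hj
    · by_cases hn : 0 < n
      · exact ⟨g ⟨n - 1, by omega⟩, fun j hj => hg (Fin.le_def.2 (by simp; omega)),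
          fun j hj => absurd j.2 (by omega)⟩
      · exact ⟨0, fun j _ => absurd j.2 (by omega), fun j hj => absurd j.2 (by omega)⟩
  have key : ∀ j : Fin n, 
      (if r ≤ j.val ∧ j.val < r + m then g j else 0)
        - (if r ≤ j.val ∧ j.val < r + m then τ else 0) ≤ g j * d j - τ * d j := by
    intro j
    have := hc0 j
    have := hc1 j
    rcases lt_or_ge j.val r with h | h
    · rw [if_neg (by omega), if_neg (by omega)]; nlinarith [hτ1 j h]
    rcases lt_or_ge j.val (r + m) with h' | h'
    · rw [if_pos ⟨h, h'⟩, if_pos ⟨h, h'⟩]; nlinarith [hτ2 j h]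
    · rw [hca j h', if_neg (by omega), if_neg (by omega)]; simp
  have := Finset.sum_le_sum (fun j (_ : j ∈ Finset.univ) => key j)
  rw [Finset.sum_sub_distrib, Finset.sum_sub_distrib, ← Finset.mul_sum, count_window r m hm,
    hcs] at this
  linarith

lemma exists_cut {n : ℕ} (g : Fin n → ℝ) (hg : Antitone g) (c : ℝ) :
    ∃ a ≤ n, (∀ j : Fin n, j.val < a → c < g j) ∧ (∀ j : Fin n, a ≤ j.val → g j ≤ c) := by
  classical
  have hex : ∃ a : ℕ, ∀ j : Fin n, a ≤ j.val → g j ≤ c := ⟨n, fun j hj => absurd j.2 (by omega)⟩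
  refine ⟨Nat.find hex, Nat.find_min' hex fun j hj => absurd j.2 (by omega), fun j hj => ?_,
    Nat.find_spec hex⟩
  have := Nat.find_min hex hj
  push Not at this
  obtain ⟨i, hi, hi'⟩ := this
  exact hi'.trans_le (hg (Fin.le_def.2 hi))

/-- The combinatorial reduction to truncations. -/
lemma trunc_le {n : ℕ} (C A B : Fin n → ℝ) (hA : Antitone A) (hB : Antitone B)
    (hA0 : ∀ j, 0 ≤ A j) (hB0 : ∀ j, 0 ≤ B j)
    (H : ∀ a b m : ℕ, a + b + m ≤ n →
      (∑ j : Fin n, if a + b ≤ j.val ∧ j.val < a + b + m then C j else 0) ≤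
      (∑ j : Fin n, if a ≤ j.val ∧ j.val < a + m then A j else 0) +
      (∑ j : Fin n, if b ≤ j.val ∧ j.val < b + m then B j else 0))
    (k : ℕ) (hk : k ≤ n) (c : ℝ) (hc : 0 ≤ c) :
    (∑ j : Fin n, if j.val < k then min (C j) c else 0) ≤
      (∑ j : Fin n, if j.val < k then min (A j) c else 0) +
      (∑ j : Fin n, if j.val < k then min (B j) c else 0) := by
  obtain ⟨a, han, ha1, ha2⟩ := exists_cut A hA c
  obtain ⟨b, hbn, hb1, hb2⟩ := exists_cut B hB c
  rcases le_or_gt k (a + b) with h | h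
  · have aux : ∀ (A : Fin n → ℝ) (a : ℕ), a ≤ n → (∀ j, 0 ≤ A j) →
        (∀ j : Fin n, j.val < a → c < A j) → ((min a k : ℕ) : ℝ) * c ≤
        (∑ j : Fin n, if j.val < k then min (A j) c else 0) := by
      intro A a han hA0 ha1
      rw [← count_lt (n := n) (min a k) (by omega) c]
      refine Finset.sum_le_sum fun j _ => ?_
      by_cases h1 : j.val < k
      · by_cases h2 : j.val < a
        · rw [if_pos (by omega), if_pos h1, min_eq_right (ha1 j h2).le]
        · rw [if_neg (by omega), if_pos h1]; exact le_min (hA0 j) hc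
      · rw [if_neg (by omega), if_neg h1]
    have h1 := aux A a han hA0 ha1
    have h2 := aux B b hbn hB0 hb1
    have h3 : (∑ j : Fin n, if j.val < k then min (C j) c else 0) ≤ k * c := by
      rw [← count_lt (n := n) k hk c]
      refine Finset.sum_le_sum fun j _ => ?_
      split_ifs
      · exact min_le_right _ _
      · exact le_rfl
    have h4 : (k : ℝ) ≤ (min a k : ℕ) + (min b k : ℕ) := by
      norm_cast; omega
    nlinarith
  · obtain ⟨m, rfl⟩ := Nat.exists_eq_add_of_lt h
    have h0 := H a b (m + 1) (by omega)
    have aux : ∀ (A : Fin n → ℝ) (a b : ℕ), a ≤ n → a + b + m + 1 ≤ n → (∀ j, 0 ≤ A j) →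
        (∀ j : Fin n, j.val < a → c < A j) → (∀ j : Fin n, a ≤ j.val → A j ≤ c) → 
        a * c + (∑ j : Fin n, if a ≤ j.val ∧ j.val < a + (m + 1) then A j else 0) ≤
        (∑ j : Fin n, if j.val < a + b + m + 1 then min (A j) c else 0) := by
      intro A a b han hk hA0 ha1 ha2
      rw [← count_lt (n := n) a han c, ← Finset.sum_add_distrib]
      refine Finset.sum_le_sum fun j _ => ?_
      rcases lt_or_ge j.val a with h1 | h1
      · rw [if_pos h1, if_neg (by omega), if_pos (by omega), min_eq_right (ha1 j h1).le, add_zero]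
      rw [if_neg (by omega), zero_add]
      rcases lt_or_ge j.val (a + (m + 1)) with h2 | h2
      · rw [if_pos ⟨h1, h2⟩, if_pos (by omega), min_eq_left (ha2 j h1)]
      · rw [if_neg (by omega)]
        split_ifs
        · exact le_min (hA0 j) hc
        · exact le_rfl
    have h1 := aux A a b han hk hA0 ha1 ha2
    have h2 := aux B b a hbn (by omega) hB0 hb1 hb2
    rw [add_comm b a] at h2
    have h3 : (∑ j : Fin n, if j.val < a + b + m + 1 then min (C j) c else 0) ≤
        ((a + b : ℕ) : ℝ) * c + 
        (∑ j : Fin n, if a + b ≤ j.val ∧ j.val < a + b + (m + 1) then C j else 0) := by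
      rw [← count_lt (n := n) (a + b) (by omega) c, ← Finset.sum_add_distrib]
      refine Finset.sum_le_sum fun j _ => ?_
      rcases lt_or_ge j.val (a + b) with h1 | h1
      · rw [if_pos (c := j.val < a + b) h1, if_neg (c := a + b ≤ j.val ∧ _) (by omega),
          if_pos (by omega), add_zero]
        exact min_le_right _ _
      rw [if_neg (c := j.val < a + b) (by omega), zero_add]
      rcases lt_or_ge j.val (a + b + (m + 1)) with h2 | h2
      · rw [if_pos (c := a + b ≤ j.val ∧ _) ⟨h1, h2⟩, if_pos (by omega)]; exact min_le_left _ _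
      · rw [if_neg (by omega), if_neg (by omega)]
    push_cast at h3
    linarith

lemma concave_mono (f : ℝ → ℝ) (hconc : ConcaveOn ℝ (Set.Ici (0 : ℝ)) f)
    (hfpos : ∀ t : ℝ, 0 ≤ t → 0 ≤ f t) : MonotoneOn f (Set.Ici 0) := by
  intro x hx y hy hxy
  by_contra hlt
  push Not at hlt
  have hx : 0 ≤ x := hx
  have hxy : x < y := lt_of_le_of_ne hxy (by rintro rfl; exact lt_irrefl _ hlt)
  have hd : 0 < f x - f y := by linarith
  have hyx : 0 < y - x := by linarith
  have hfy := hfpos y hy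
  set u : ℝ := (f y + 1) * (y - x) / (f x - f y) with hu
  have hu0 : 0 < u := by positivity
  have hy0 : 0 ≤ y := hy
  have h := hconc.slope_anti_adjacent (x := x) (y := y) (z := y + u) hx
    (by simp only [Set.mem_Ici]; linarith) hxy (by linarith)
  have h2 := hfpos (y + u) (by linarith)
  rw [div_le_div_iff₀ (by linarith) hyx] at h
  have hu' : u * (f x - f y) = (f y + 1) * (y - x) := by rw [hu]; field_simp
  nlinarith

lemma concave_decomp (S : Finset ℝ) : (∀ t ∈ S, 0 < t) → ∀ f : ℝ → ℝ,
    ConcaveOn ℝ (Set.Ici (0 : ℝ)) f → f 0 = 0 → MonotoneOn f (insert 0 (S : Set ℝ)) →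
    ∃ w : ℝ → ℝ, (∀ c ∈ S, 0 ≤ w c) ∧ ∀ t ∈ insert 0 S, f t = ∑ c ∈ S, w c * min t c := by
  induction S using Finset.induction_on_max with
  | empty => intro _ f _ hf0 _; exact ⟨0, by simp, by simpa using hf0⟩
  | insert T S hT ih =>
    intro hpos f hconc hf0 hmono
    have hTS : T ∉ S := fun h => lt_irrefl _ (hT T h)
    have hT0 : 0 < T := hpos T (by simp)
    have hS0 : ∀ t ∈ S, 0 < t := fun t ht => hpos t (by simp [ht])
    obtain ⟨M, hM, hMmax⟩ : ∃ M ∈ insert 0 S, ∀ t ∈ insert 0 S, t ≤ M :=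
      ⟨(insert 0 S).max' (by simp), Finset.max'_mem _ _, fun t ht => Finset.le_max' _ t ht⟩
    have hMT : M < T := by
      rcases Finset.mem_insert.1 hM with h | h
      · rw [h]; exact hT0
      · exact hT M h
    have hM0 : 0 ≤ M := hMmax 0 (by simp)
    have hfMT : f M ≤ f T := hmono (by
      rcases Finset.mem_insert.1 hM with h | h
      · simp [h]
      · simp [h]) (by simp) hMT.le
    set s : ℝ := (f T - f M) / (T - M) with hs
    have hs0 : 0 ≤ s := div_nonneg (by linarith) (by linarith)
    have hsT : s * (T - M) = f T - f M := by
      rw [hs]; exact div_mul_cancel₀ _ (by linarith)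
    obtain ⟨w, hw0, hw⟩ := ih hS0 (fun t => f t - s * t)
      (by
        refine hconc.sub ?_
        exact ((convexOn_id (convex_Ici 0)).smul hs0))
      (by simp [hf0])
      (by
        intro x hx y hy hxy
        have hx' : x ∈ insert 0 S := by simpa using hx
        have hy' : y ∈ insert 0 S := by simpa using hy
        have hx0 : 0 ≤ x := by
          rcases Finset.mem_insert.1 hx' with h | h
          · exact h.ge
          · exact (hS0 x h).le
        rcases hxy.eq_or_lt with rfl | hxy
        · exact le_rfl
        have hyM := hMmax y hy'
        have e1 : s ≤ (f y - f x) / (y - x) := by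
          rcases hyM.eq_or_lt with rfl | hyM
          · exact hconc.slope_anti_adjacent (x := x) (y := y) (z := T) hx0 hT0.le hxy hMT
          · exact (hconc.slope_anti_adjacent (x := y) (y := M) (z := T) 
              (hx0.trans hxy.le) hT0.le hyM hMT).trans
              (hconc.slope_anti_adjacent (x := x) (y := y) (z := M) hx0 hM0 hxy hyM)
        rw [le_div_iff₀ (by linarith)] at e1
        show f x - s * x ≤ f y - s * y
        linarith)
    refine ⟨fun c => if c = T then s else w c, ?_, ?_⟩
    · intro c hc
      by_cases h : c = T
      · simp [h, hs0]
      · simpa [h] using hw0 c (by simpa [h] using hc)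
    · intro t ht
      rw [Finset.sum_insert hTS]
      have e : ∑ c ∈ S, (if c = T then s else w c) * min t c = ∑ c ∈ S, w c * min t c := by
        refine Finset.sum_congr rfl fun c hc => ?_
        rw [if_neg (by rintro rfl; exact hTS hc)]
      rw [e]
      beta_reduce
      rw [if_pos rfl]
      by_cases h : t = T
      · subst h
        have e2 : ∑ c ∈ S, w c * min t c = ∑ c ∈ S, w c * min M c := by
          refine Finset.sum_congr rfl fun c hc => ?_
          rw [min_eq_right (hT c hc).le, min_eq_right (hMmax c (by simp [hc]))]
        rw [e2, ← hw M hM, min_self]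
        linarith
      · have ht' : t ∈ insert 0 S := by
          simp only [Finset.mem_insert] at ht ⊢; tauto
        rw [← hw t ht', min_eq_left ((hMmax t ht').trans hMT.le)]
        ring

lemma concave_le {n : ℕ} (f : ℝ → ℝ)
    (hconc : ConcaveOn ℝ (Set.Ici (0 : ℝ)) f) (hf0 : f 0 = 0)
    (hfpos : ∀ t : ℝ, 0 ≤ t → 0 ≤ f t) (C A B : Fin n → ℝ) 
    (hA0 : ∀ j, 0 ≤ A j) (hB0 : ∀ j, 0 ≤ B j) (hC0 : ∀ j, 0 ≤ C j) (k : ℕ)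
    (H : ∀ c : ℝ, 0 ≤ c → (∑ j : Fin n, if j.val < k then min (C j) c else 0) ≤
      (∑ j : Fin n, if j.val < k then min (A j) c else 0) +
      (∑ j : Fin n, if j.val < k then min (B j) c else 0)) :
    (∑ j : Fin n, if j.val < k then f (C j) else 0) ≤
      (∑ j : Fin n, if j.val < k then f (A j) else 0) +
      (∑ j : Fin n, if j.val < k then f (B j) else 0) := by
  classical
  set S : Finset ℝ := (Finset.univ.image A ∪ Finset.univ.image B ∪ Finset.univ.image C).filter
    (fun t => 0 < t) with hS
  have hSpos : ∀ t ∈ S, 0 < t := fun t ht => (Finset.mem_filter.1 ht).2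
  obtain ⟨w, hw0, hw⟩ := concave_decomp S hSpos f hconc hf0
    ((concave_mono f hconc hfpos).mono (by
      intro t ht
      rcases ht with h | h
      · exact h.ge
      · exact (hSpos t h).le))
  have hmem : ∀ t : ℝ, 0 ≤ t → t ∈ (Finset.univ.image A ∪ Finset.univ.image B ∪ Finset.univ.image C)
      → t ∈ insert 0 S := by
    intro t ht0 ht
    rcases ht0.eq_or_lt with h | h
    · simp [← h]
    · exact Finset.mem_insert_of_mem (Finset.mem_filter.2 ⟨ht, h⟩)
  have aux : ∀ X : Fin n → ℝ, (∀ j, X j ∈ insert 0 S) → 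
      (∑ j : Fin n, if j.val < k then f (X j) else 0) =
      ∑ c ∈ S, w c * (∑ j : Fin n, if j.val < k then min (X j) c else 0) := by
    intro X hX
    simp_rw [Finset.mul_sum]
    rw [Finset.sum_comm]
    refine Finset.sum_congr rfl fun j _ => ?_
    split_ifs
    · exact hw _ (hX j)
    · simp
  rw [aux C (fun j => hmem _ (hC0 j) (by simp)), aux A (fun j => hmem _ (hA0 j) (by simp)),
    aux B (fun j => hmem _ (hB0 j) (by simp)), ← Finset.sum_add_distrib]
  refine Finset.sum_le_sum fun c hc => ?_
  rw [← mul_add]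
  exact mul_le_mul_of_nonneg_left (H c (hSpos c hc).le) (hw0 c hc)

lemma upper_bound {n m : ℕ} (T : EuclideanSpace ℂ (Fin n) →ₗ[ℂ] EuclideanSpace ℂ (Fin n))
    (σ : Fin n → ℝ) (hσ : Antitone σ) (hσ0 : ∀ j, 0 ≤ σ j)
    (x y : OrthonormalBasis (Fin n) ℂ (EuclideanSpace ℂ (Fin n)))
    (hT : ∀ j, T (x j) = (σ j : ℂ) • y j)
    (e F : Fin m → EuclideanSpace ℂ (Fin n)) (he : Orthonormal ℂ e) (hF : Orthonormal ℂ F)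
    (a : ℕ) (ham : a + m ≤ n) (hea : ∀ j : Fin n, j.val < a → ∀ i, inner ℂ (x j) (e i) = 0) :
    (∑ i, inner ℂ (F i) (T (e i))).re ≤
      ∑ j : Fin n, if a ≤ j.val ∧ j.val < a + m then σ j else 0 := by
  have hexp : ∀ i, inner ℂ (F i) (T (e i)) =
      ∑ j, (σ j : ℂ) * (inner ℂ (F i) (y j) * inner ℂ (x j) (e i)) := by
    intro i
    conv_lhs => rw [← x.sum_repr' (e i)]
    rw [map_sum, inner_sum]
    refine Finset.sum_congr rfl fun j _ => ?_
    rw [map_smul, hT, inner_smul_right, inner_smul_right]; ring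
  set c : Fin n → ℝ := fun j => ∑ i, (‖inner ℂ (F i) (y j)‖ ^ 2 + ‖inner ℂ (x j) (e i)‖ ^ 2) / 2
    with hc
  set c' : Fin n → ℝ := fun j => if j.val < a then 0 else c j with hc'
  have hc0 : ∀ j, 0 ≤ c j := fun j => Finset.sum_nonneg fun i _ => by positivity
  have hc1 : ∀ j, c j ≤ 1 := by
    intro j
    have h1 := hF.sum_inner_products_le (s := Finset.univ) (y j)
    have h2 := he.sum_inner_products_le (s := Finset.univ) (x j)
    simp only [OrthonormalBasis.norm_eq_one] at h1 h2
    simp only [hc]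
    rw [← Finset.sum_div, Finset.sum_add_distrib]
    simp only [norm_inner_symm (x j)]
    linarith
  have hcs : ∑ j, c j = m := by
    simp only [hc]
    rw [Finset.sum_comm]
    have : ∀ i, ∑ j, (‖inner ℂ (F i) (y j)‖ ^ 2 + ‖inner ℂ (x j) (e i)‖ ^ 2) / 2 = 1 := by
      intro i
      rw [← Finset.sum_div, Finset.sum_add_distrib, y.sum_sq_norm_inner_left,
        x.sum_sq_norm_inner_right, hF.1, he.1]
      norm_num
    simp [this]
  have hbound : ∀ j : Fin n, 
      (∑ i, ((σ j : ℂ) * (inner ℂ (F i) (y j) * inner ℂ (x j) (e i)))).re ≤ σ j * c' j := by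
    intro j
    by_cases hj : j.val < a
    · simp [hc', hj, hea j hj]
    · simp only [hc', if_neg hj, hc]
      rw [← Finset.mul_sum, Complex.re_ofReal_mul, Complex.re_sum]
      refine mul_le_mul_of_nonneg_left (Finset.sum_le_sum fun i _ => ?_) (hσ0 j)
      refine (Complex.re_le_norm _).trans ?_
      rw [norm_mul]
      nlinarith [sq_nonneg (‖inner ℂ (F i) (y j)‖ - ‖inner ℂ (x j) (e i)‖)]
  calc (∑ i, inner ℂ (F i) (T (e i))).re
      = ∑ j, (∑ i, ((σ j : ℂ) * (inner ℂ (F i) (y j) * inner ℂ (x j) (e i)))).re := by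
        simp_rw [hexp]
        rw [Finset.sum_comm, Complex.re_sum]
    _ ≤ ∑ j, σ j * c' j := Finset.sum_le_sum fun j _ => hbound j
    _ ≤ _ := by
        refine weights_le σ c' hσ hσ0 ?_ ?_ a m ham ?_ ?_
        · intro j; simp only [hc']; split_ifs; exacts [le_rfl, hc0 j]
        · intro j; simp only [hc']; split_ifs; exacts [zero_le_one, hc1 j]
        · intro j hj; simp [hc', hj]
        · rw [← hcs]
          refine Finset.sum_le_sum fun j _ => ?_
          simp only [hc']; split_ifs; exacts [hc0 j, le_rfl]

lemma lower_bound {n m : ℕ} (T : EuclideanSpace ℂ (Fin n) →ₗ[ℂ] EuclideanSpace ℂ (Fin n))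
    (σ : Fin n → ℝ) (hσ : Antitone σ)
    (x y : OrthonormalBasis (Fin n) ℂ (EuclideanSpace ℂ (Fin n)))
    (hT : ∀ j, T (x j) = (σ j : ℂ) • y j)
    (e : Fin m → EuclideanSpace ℂ (Fin n)) (he : Orthonormal ℂ e)
    (r : ℕ) (hrm : r + m ≤ n) (her : ∀ j : Fin n, r + m ≤ j.val → ∀ i, inner ℂ (x j) (e i) = 0) :
    (∑ j : Fin n, if r ≤ j.val ∧ j.val < r + m then σ j else 0) ≤ 
    (∑ i, inner ℂ ((x.equiv y (Equiv.refl _)) (e i)) (T (e i))).re := by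
  have hin : ∀ i j, inner ℂ ((x.equiv y (Equiv.refl _)) (e i)) (y j) = inner ℂ (e i) (x j) := by
    intro i j
    have : y j = (x.equiv y (Equiv.refl _)) (x j) := by simp
    rw [this, LinearIsometryEquiv.inner_map_map]
  have hexp : ∀ i, inner ℂ ((x.equiv y (Equiv.refl _)) (e i)) (T (e i)) =
      ∑ j, (σ j : ℂ) * ((‖inner ℂ (x j) (e i)‖ ^ 2 : ℝ) : ℂ) := by
    intro i
    conv_lhs => 
      arg 3
      rw [← x.sum_repr' (e i)]
    rw [map_sum, inner_sum]
    refine Finset.sum_congr rfl fun j _ => ?_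
    rw [map_smul, hT, inner_smul_right, inner_smul_right, hin, mul_left_comm,
      ← inner_conj_symm (e i) (x j), Complex.mul_conj']
    push_cast
    rfl
  set d : Fin n → ℝ := fun j => ∑ i, ‖inner ℂ (x j) (e i)‖ ^ 2 with hd
  have : (∑ i, inner ℂ ((x.equiv y (Equiv.refl _)) (e i)) (T (e i))).re = ∑ j, σ j * d j := by
    simp_rw [hexp]
    rw [Finset.sum_comm, Complex.re_sum]
    refine Finset.sum_congr rfl fun j _ => ?_
    rw [← Finset.mul_sum, ← Complex.ofReal_sum, ← Complex.ofReal_mul, Complex.ofReal_re]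
  rw [this]
  refine weights_ge σ d hσ (fun j => Finset.sum_nonneg fun i _ => by positivity) ?_ r m hrm ?_ ?_
  · intro j
    have h2 := he.sum_inner_products_le (s := Finset.univ) (x j)
    simp only [OrthonormalBasis.norm_eq_one] at h2
    simp only [hd, norm_inner_symm (x j)]
    linarith
  · intro j hj
    simp [hd, her j hj]
  · simp only [hd]
    rw [Finset.sum_comm]
    simp [x.sum_sq_norm_inner_right, he.1]

lemma exists_frame {n : ℕ} (a b m : ℕ) (h : a + b + m ≤ n) 
    (x x' v : OrthonormalBasis (Fin n) ℂ (EuclideanSpace ℂ (Fin n))) :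
    ∃ e : Fin m → EuclideanSpace ℂ (Fin n), Orthonormal ℂ e ∧
      (∀ j : Fin n, j.val < a → ∀ i, inner ℂ (x j) (e i) = 0) ∧ 
      (∀ j : Fin n, j.val < b → ∀ i, inner ℂ (x' j) (e i) = 0) ∧ 
      (∀ j : Fin n, a + b + m ≤ j.val → ∀ i, inner ℂ (v j) (e i) = 0) := by
  classical
  set S : Finset (EuclideanSpace ℂ (Fin n)) :=
    ((Finset.univ.filter (fun j : Fin n => j.val < a)).image x ∪
    (Finset.univ.filter (fun j : Fin n => j.val < b)).image x') ∪
    (Finset.univ.filter (fun j : Fin n => a + b + m ≤ j.val)).image v with hS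
  have c1 : ∀ q, q ≤ n → (Finset.univ.filter (fun j : Fin n => j.val < q)).card = q := by
    intro q hq
    have := count_lt (n := n) q hq 1
    rw [← Finset.sum_filter] at this
    simp only [Finset.sum_const, nsmul_eq_mul, mul_one] at this
    exact_mod_cast this
  have c2 : (Finset.univ.filter (fun j : Fin n => a + b + m ≤ j.val)).card = n - (a + b + m) := by
    have h1 := Finset.card_filter_add_card_filter_not (s := (Finset.univ : Finset (Fin n)))
      (fun j : Fin n => j.val < a + b + m)
    simp only [not_lt] at h1
    rw [c1 _ h, Finset.card_univ, Fintype.card_fin] at h1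
    omega
  have hcard : S.card ≤ a + b + (n - (a + b + m)) := by
    refine (Finset.card_union_le _ _).trans (Nat.add_le_add ((Finset.card_union_le _ _).trans
      (Nat.add_le_add ?_ ?_)) ?_)
    · exact Finset.card_image_le.trans (c1 a (by omega)).le
    · exact Finset.card_image_le.trans (c1 b (by omega)).le
    · exact Finset.card_image_le.trans c2.le
  set W : Submodule ℂ (EuclideanSpace ℂ (Fin n)) := Submodule.span ℂ (S : Set _) with hW
  have hfr : Module.finrank ℂ W ≤ S.card := finrank_span_finset_le_card S
  have hsum := W.finrank_add_finrank_orthogonal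
  rw [finrank_euclideanSpace, Fintype.card_fin] at hsum
  have hm : m ≤ Module.finrank ℂ Wᗮ := by omega
  let bs := stdOrthonormalBasis ℂ Wᗮ
  have horth : ∀ z ∈ S, ∀ i, inner ℂ z ((bs i : Wᗮ) : EuclideanSpace ℂ (Fin n)) = 0 := by
    intro z hz i
    exact (Submodule.mem_orthogonal W _).1 (bs i).2 z (Submodule.subset_span hz)
  refine ⟨fun i => (bs (Fin.castLE hm i) : EuclideanSpace ℂ (Fin n)), ?_, ?_, ?_, ?_⟩
  · have := (bs.orthonormal.comp (Fin.castLE hm) (Fin.castLE_injective hm))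
    exact this.comp_linearIsometry Wᗮ.subtypeₗᵢ
  · intro j hj i
    exact horth _ (by simp only [hS, Finset.mem_union, Finset.mem_image, Finset.mem_filter]; exact Or.inl (Or.inl ⟨j, by simp [hj], rfl⟩)) _
  · intro j hj i
    exact horth _ (by simp only [hS, Finset.mem_union, Finset.mem_image, Finset.mem_filter]; exact Or.inl (Or.inr ⟨j, by simp [hj], rfl⟩)) _
  · intro j hj i
    exact horth _ (by simp only [hS, Finset.mem_union, Finset.mem_image, Finset.mem_filter]; exact Or.inr ⟨j, by simp [hj], rfl⟩) _

lemma exists_svd {n : ℕ} (M : Matrix (Fin n) (Fin n) ℂ) :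
    ∃ x y : OrthonormalBasis (Fin n) ℂ (EuclideanSpace ℂ (Fin n)),
      ∀ j, Matrix.toEuclideanLin M (x j) = (singVals M j : ℂ) • y j := by
  set hM := (Matrix.posSemidef_conjTranspose_mul_self M) with hMdef
  set x := hM.1.eigenvectorBasis with hx
  have hev : ∀ j, Matrix.toEuclideanLin (Mᴴ * M) (x j) = ((hM.1.eigenvalues j : ℝ) : ℂ) • x j := by
    intro j
    have := hM.1.mulVec_eigenvectorBasis j
    ext i
    have := congrFun this i
    simpa using this
  have hsq : ∀ j, ((hM.1.eigenvalues j : ℝ) : ℂ) = (singVals M j : ℂ) ^ 2 := by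
    intro j
    rw [← Complex.ofReal_pow]
    congr 1
    exact (Real.sq_sqrt (hM.eigenvalues_nonneg j)).symm
  have hinner : ∀ i j, inner ℂ (Matrix.toEuclideanLin M (x i)) (Matrix.toEuclideanLin M (x j)) =
      if i = j then (singVals M j : ℂ) ^ 2 else 0 := by
    intro i j
    rw [← LinearMap.adjoint_inner_right, ← Matrix.toEuclideanLin_conjTranspose_eq_adjoint]
    have : Matrix.toEuclideanLin Mᴴ (Matrix.toEuclideanLin M (x j)) =
        Matrix.toEuclideanLin (Mᴴ * M) (x j) := by
      ext i; simp [Matrix.toLpLin_apply, Matrix.mulVec_mulVec]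
    rw [this, hev, inner_smul_right, hsq, orthonormal_iff_ite.1 x.orthonormal i j]
    simp
  let v : Fin n → EuclideanSpace ℂ (Fin n) := fun j => 
    ((singVals M j : ℂ)⁻¹) • Matrix.toEuclideanLin M (x j)
  let s : Set (Fin n) := {j | singVals M j ≠ 0}
  have hv : Orthonormal ℂ (s.domRestrict v) := by
    rw [orthonormal_iff_ite]
    rintro ⟨i, hi⟩ ⟨j, hj⟩
    have hj' : (singVals M j : ℂ) ≠ 0 := by exact_mod_cast hj
    simp only [Set.domRestrict_apply, v, inner_smul_left, inner_smul_right, hinner, Subtype.mk.injEq]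
    by_cases h : i = j
    · subst h
      simp
      field_simp
    · simp [h]
  obtain ⟨y, hy⟩ := hv.exists_orthonormalBasis_extension_of_card_eq (by simp)
  refine ⟨x, y, fun j => ?_⟩
  by_cases hj : singVals M j = 0
  · have h0 := hinner j j
    rw [if_pos rfl, hj] at h0
    rw [hj]
    simp only [Complex.ofReal_zero, zero_smul]
    apply (inner_self_eq_zero (𝕜 := ℂ)).1
    rw [h0]; simp
  · have hj' : (singVals M j : ℂ) ≠ 0 := by exact_mod_cast hj
    rw [hy j hj]
    simp only [v]
    rw [smul_smul, mul_inv_cancel₀ hj', one_smul]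

lemma exists_sort (n : ℕ) : ∃ p : Equiv.Perm (Fin n),
    ∀ M : Matrix (Fin n) (Fin n) ℂ, Antitone (fun j => singVals M (p j)) := by
  refine ⟨(finCongr (Fintype.card_fin n).symm).trans (Fintype.equivOfCardEq (Fintype.card_fin _)),
    fun M i j hij => Real.sqrt_le_sqrt ?_⟩
  unfold Matrix.IsHermitian.eigenvalues
  apply Matrix.IsHermitian.eigenvalues₀_antitone
  simpa using hij

lemma window_le {n : ℕ} (p : Equiv.Perm (Fin n)) (A B : Matrix (Fin n) (Fin n) ℂ)
    (hp : ∀ M : Matrix (Fin n) (Fin n) ℂ, Antitone (fun j => singVals M (p j)))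
    (a b m : ℕ) (h : a + b + m ≤ n) :
    (∑ j : Fin n, if a + b ≤ j.val ∧ j.val < a + b + m then singVals (A + B) (p j) else 0) ≤
      (∑ j : Fin n, if a ≤ j.val ∧ j.val < a + m then singVals A (p j) else 0) +
      (∑ j : Fin n, if b ≤ j.val ∧ j.val < b + m then singVals B (p j) else 0) := by
  have svd : ∀ M : Matrix (Fin n) (Fin n) ℂ, 
      ∃ x y : OrthonormalBasis (Fin n) ℂ (EuclideanSpace ℂ (Fin n)),
      ∀ j, Matrix.toEuclideanLin M (x j) = (singVals M (p j) : ℂ) • y j := by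
    intro M
    obtain ⟨x, y, hxy⟩ := exists_svd M
    exact ⟨x.reindex p.symm, y.reindex p.symm, fun j => by simpa using hxy (p j)⟩
  obtain ⟨v, w, hC⟩ := svd (A + B)
  obtain ⟨x, y, hA⟩ := svd A
  obtain ⟨x', y', hB⟩ := svd B
  obtain ⟨e, he, e1, e2, e3⟩ := exists_frame a b m h x x' v
  have hF : Orthonormal ℂ (fun i => (v.equiv w (Equiv.refl _)) (e i)) :=
    he.comp_linearIsometryEquiv _
  have h1 := lower_bound _ _ (hp (A + B)) v w hC e he (a + b) h e3
  have h2 := upper_bound _ _ (hp A) (fun j => Real.sqrt_nonneg _) x y hA e _ he hF a (by omega) e1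
  have h3 := upper_bound _ _ (hp B) (fun j => Real.sqrt_nonneg _) x' y' hB e _ he hF b (by omega) e2
  refine h1.trans ?_
  rw [map_add]
  simp only [LinearMap.add_apply, inner_add_right, Finset.sum_add_distrib, Complex.add_re]
  exact add_le_add h2 h3

/-- Uchiyama's subadditivity theorem: for a concave `f : ℝ₊ → ℝ₊` with `f 0 = 0`,
`{f(σ_j(A+B))}_j ≺_w {f(σ_j(A)) + f(σ_j(B))}_j`. -/
theorem uchiyama_subadditivity {n : ℕ} (f : ℝ → ℝ)
    (hconc : ConcaveOn ℝ (Set.Ici (0 : ℝ)) f) (hf0 : f 0 = 0)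
    (hfpos : ∀ t : ℝ, 0 ≤ t → 0 ≤ f t)
    (A B : Matrix (Fin n) (Fin n) ℂ) :
    IsWeaklyMajorizedBy (fun j => f (singVals (A + B) j))
      (fun j => f (singVals A j) + f (singVals B j)) := by
  classical
  intro s
  obtain ⟨p, hp⟩ := exists_sort n
  have hnn : ∀ M : Matrix (Fin n) (Fin n) ℂ, ∀ j, 0 ≤ singVals M j := fun M j => Real.sqrt_nonneg _
  have hk : s.card ≤ n := by simpa using s.card_le_univ
  set t0 : Finset (Fin n) := Finset.univ.filter (fun j : Fin n => j.val < s.card) with ht0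
  have ht0c : t0.card = s.card := by
    have := count_lt (n := n) s.card hk 1
    rw [← Finset.sum_filter] at this
    simp only [Finset.sum_const, nsmul_eq_mul, mul_one] at this
    exact_mod_cast this
  refine ⟨t0.map p.toEmbedding, by rw [Finset.card_map, ht0c], ?_⟩
  rw [Finset.sum_map]
  have main := concave_le f hconc hf0 hfpos (fun j => singVals (A + B) (p j))
    (fun j => singVals A (p j)) (fun j => singVals B (p j)) (fun j => hnn _ _) (fun j => hnn _ _)
    (fun j => hnn _ _) s.card (fun c hc => trunc_le _ _ _ (hp A) (hp B) (fun j => hnn _ _)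
      (fun j => hnn _ _) (window_le p A B hp) s.card hk c hc)
  have hw := weights_le (fun j => f (singVals (A + B) (p j))) (fun j => if p j ∈ s then 1 else 0)
    (fun i j hij => concave_mono f hconc hfpos (hnn _ _) (hnn _ _) (hp (A + B) hij))
    (fun j => hfpos _ (hnn _ _)) (fun j => by split_ifs <;> norm_num)
    (fun j => by split_ifs <;> norm_num) 0 s.card (by omega)
    (fun j hj => absurd hj (by omega))
    (by rw [Equiv.sum_comp p (fun j => if j ∈ s then (1 : ℝ) else 0)]; simp)
  simp only [Nat.zero_le, true_and, zero_add] at hw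
  have e1 : ∑ j, f (singVals (A + B) (p j)) * (if p j ∈ s then 1 else 0) =
      ∑ i ∈ s, f (singVals (A + B) i) := by
    rw [Equiv.sum_comp p (fun j => f (singVals (A + B) j) * (if j ∈ s then (1 : ℝ) else 0))]
    simp
  rw [e1] at hw
  refine hw.trans (main.trans (le_of_eq ?_))
  rw [← Finset.sum_add_distrib, ht0, Finset.sum_filter]
  refine Finset.sum_congr rfl fun j _ => ?_
  split_ifs <;> simp
end
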